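/- Let G = (V,E) be a connected multigraph whose vertex set is partitioned into V_0, V_1, ..., V_k where each V_i (1 ≤ i ≤ k) is a clique of G. Let M = ∪_{0≤i<j≤k} E_G(V_i,V_j) and let W be a subset of E with M ⊆ W such that G[W] is a forest. Let G⋆W be obtained from G by adding, for each component W_1,...,W_r of G[W], a new vertex w_i joined to all vertices of W_i. Let G' = (G⋆W) − M, V'_0 = V_0 ∪ (V(G⋆W) − V(G)), and W' = E(G⋆W) − E(G). Then: (i) τ_G(W) = τ_{G'}(W'); (ii) V'_0, V_1, ..., V_k is a partition of V(G') and each V_i (1 ≤ i ≤ k) is a clique of G'; (iii) E_{G'}(V_i,V_j) = ∅ for all 1 ≤ i < j ≤ k; (iv) each component of G'[W'] is a star whose center lies in V(G') − V(G) ⊆ V'_0. -/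

import Mathlib

/-!
Spanning trees of multigraphs: common definitions.

A multigraph on a vertex type `V` with edge type `E` is given by an incidence
map `inc : E → Sym2 V` sending each edge to its (unordered) pair of endpoints.
-/

namespace PaperST

universe u v

/-- A multigraph on vertex type `V` with edge type `E`. -/
structure Multigraph (V : Type u) (E : Type v) where
  /-- the two (possibly equal) endpoints of each edge -/
  inc : E → Sym2 V

namespace Multigraph

variable {V : Type u} {E : Type v}

/-- One step along an edge of `T`. -/
def Step (G : Multigraph V E) (T : Set E) (u v : V) : Prop :=
  ∃ e ∈ T, G.inc e = s(u, v)

theorem step_symm (G : Multigraph V E) (T : Set E) : Symmetric (G.Step T) := by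
  rintro u v ⟨e, he, hinc⟩
  exact ⟨e, he, by rw [hinc]; exact Sym2.eq_swap⟩

/-- Reachability using only edges in `T`. -/
def Reach (G : Multigraph V E) (T : Set E) : V → V → Prop :=
  Relation.ReflTransGen (G.Step T)

/-- The spanning subgraph `G⟨T⟩` is connected. -/
def ConnectedOn (G : Multigraph V E) (T : Set E) : Prop :=
  ∀ u v : V, G.Reach T u v

/-- `G` is connected. -/
def Connected (G : Multigraph V E) : Prop :=
  G.ConnectedOn Set.univ

/-- `G` has no loops. -/
def Loopless (G : Multigraph V E) : Prop :=
  ∀ e : E, ¬ (G.inc e).IsDiag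

/-- A spanning tree of a (finite) multigraph: a connected spanning subgraph
with `|V| - 1` edges. -/
def IsSpanningTree (G : Multigraph V E) (T : Set E) : Prop :=
  G.ConnectedOn T ∧ T.ncard + 1 = Nat.card V

/-- The set `ST_G(M)` of spanning trees of `G` containing all edges of `M`. -/
def ST (G : Multigraph V E) (M : Set E) : Set (Set E) :=
  {T | G.IsSpanningTree T ∧ M ⊆ T}

/-- `τ_G(M)`: the number of spanning trees of `G` containing all edges of `M`. -/
noncomputable def tau (G : Multigraph V E) (M : Set E) : ℕ :=
  (G.ST M).ncard

/-- The spanning subgraph `G⟨W⟩` is a forest (no cycles): there are no loops in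
`W` and every edge of `W` is a bridge of `G⟨W⟩`. -/
def IsForest (G : Multigraph V E) (W : Set E) : Prop :=
  ∀ e ∈ W, ¬ (G.inc e).IsDiag ∧
    ∀ u v : V, G.inc e = s(u, v) → ¬ G.Reach (W \ {e}) u v

/-- Edges with all endpoints in `U`: the edge set of the induced subgraph `G[U]`. -/
def edgesWithin (G : Multigraph V E) (U : Set V) : Set E :=
  {e | ∀ v ∈ G.inc e, v ∈ U}

/-- `E_G(U₁, U₂)`: edges with one end in `U₁` and the other end in `U₂`. -/
def edgesBetween (G : Multigraph V E) (U₁ U₂ : Set V) : Set E :=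
  {e | ∃ u v, G.inc e = s(u, v) ∧ u ∈ U₁ ∧ v ∈ U₂}

/-- `E_G(U) = E_G(U, V − U)`: edges with one end in `U` and the other outside. -/
def edgeBoundary (G : Multigraph V E) (U : Set V) : Set E :=
  G.edgesBetween U Uᶜ

/-- `U` is a clique of `G`: the induced subgraph `G[U]` is a complete graph,
i.e. exactly one edge joins each pair of distinct vertices of `U`, and there
are neither loops nor parallel edges inside `U`. -/
def IsClique (G : Multigraph V E) (U : Set V) : Prop :=
  (∀ u ∈ U, ∀ v ∈ U, u ≠ v → ∃! e : E, G.inc e = s(u, v)) ∧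
    ∀ e ∈ G.edgesWithin U, ¬ (G.inc e).IsDiag

/-- The degree of a vertex: the number of edges incident with it. -/
noncomputable def degree (G : Multigraph V E) (v : V) : ℕ :=
  {e : E | v ∈ G.inc e}.ncard

/-- The vertices incident with some edge of `W`: the vertex set of `G[W]`. -/
def supp (G : Multigraph V E) (W : Set E) : Set V :=
  {v | ∃ e ∈ W, v ∈ G.inc e}

/-- Edges `e` and `f` lie in the same component of `G[W]`. -/
def EdgeConn (G : Multigraph V E) (W : Set E) (e f : E) : Prop :=
  ∃ u v : V, u ∈ G.inc e ∧ v ∈ G.inc f ∧ G.Reach W u v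

/-- Every component of `G[W]` is a star whose center lies in `C`. -/
def StarComponents (G : Multigraph V E) (W : Set E) (C : Set V) : Prop :=
  ∀ e ∈ W, ∃ w ∈ C, ∀ f ∈ W, G.EdgeConn W e f →
    (w ∈ G.inc f ∧ ¬ (G.inc f).IsDiag ∧
      ∀ g ∈ W, G.EdgeConn W e g → G.inc g = G.inc f → g = f)

/-- The setoid on `V` identifying the vertices connected by edges of `W`. -/
def contractSetoid (G : Multigraph V E) (W : Set E) : Setoid V where
  r := G.Reach W
  iseqv := ⟨fun _ => Relation.ReflTransGen.refl,
    fun h => (@Relation.ReflTransGen.symmetric _ _ ⟨fun _ _ h => G.step_symm W h⟩).symm _ _ h,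
    fun h h' => Relation.ReflTransGen.trans h h'⟩

/-- The contraction `G/W` of the edges in `W`. -/
def contract (G : Multigraph V E) (W : Set E) :
    Multigraph (Quotient (G.contractSetoid W)) {e : E // e ∉ W} :=
  ⟨fun e => (G.inc e.val).map (Quotient.mk (G.contractSetoid W))⟩

/-- Deletion `G − D` of the edges in `D`. -/
def deleteEdges (G : Multigraph V E) (D : Set E) : Multigraph V {e : E // e ∉ D} :=
  ⟨fun e => G.inc e.val⟩

/-- The closed neighbourhood `N_G[S]`. -/
def closedNbhd (G : Multigraph V E) (S : Set V) : Set V :=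
  S ∪ {v | ∃ u ∈ S, ∃ e : E, G.inc e = s(u, v)}

/-- The induced subgraph `G[A]`, described using a choice `ends` of the pair of
endpoints of each edge. -/
def induce (G : Multigraph V E) (A : Set V) (ends : E → V × V)
    (hends : ∀ e, G.inc e = s((ends e).1, (ends e).2)) :
    Multigraph A {e : E // e ∈ G.edgesWithin A} :=
  ⟨fun e => s(⟨(ends e.val).1, e.prop _ (by rw [hends]; exact Sym2.mem_mk_left _ _)⟩,
              ⟨(ends e.val).2, e.prop _ (by rw [hends]; exact Sym2.mem_mk_right _ _)⟩)⟩

end Multigraph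


open Multigraph

/-- The graph `G⋆W`: for each component (indexed by `i : Fin r` via `comp`) of
`G[W]`, add a new vertex `wᵢ` joined to every vertex of that component. -/
def Multigraph.starGraph {V : Type u} {E : Type v} (G : Multigraph V E)
    (W : Set E) {r : ℕ} (comp : V → Fin r) :
    Multigraph (V ⊕ Fin r)
      (E ⊕ {p : Fin r × V // p.2 ∈ G.supp W ∧ comp p.2 = p.1}) :=
  ⟨Sum.elim (fun e => (G.inc e).map Sum.inl)
    (fun p => s(Sum.inr p.val.1, Sum.inl p.val.2))⟩

/-- The classes `V'₀, V₁, …, V_k` of `V(G⋆W)`: the class of `none` (i.e. `V₀`)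
also collects all the newly added vertices. -/
def liftedClass {V : Type u} (k r : ℕ) (part : V → Option (Fin k)) :
    Option (Fin k) → Set (V ⊕ Fin r)
  | none => Sum.inl '' (part ⁻¹' {none}) ∪ Set.range Sum.inr
  | some i => Sum.inl '' (part ⁻¹' {some i})

/-!
Replacing a forest `W` by the edges at the new vertices does not change which vertices are
connected: two vertices of a component of `G[W]` are joined through the new vertex of that
component. Since `W` is a forest with `r` components, the component count
`|W| + #components = |V|` shows that there are exactly `|W| + r` new edges, and `r` is also the
number of new vertices. Hence `T ↦ (T \ W) ∪ W'` maps the spanning trees of `G` through `W` to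
the spanning trees of `G⋆W` through `W'`. It is onto because a spanning tree through `W'` cannot
use an edge of `W`: trading `W'` back for `W` would leave too few edges to connect `G`. In
particular, deleting `M ⊆ W` destroys no spanning tree through `W'`.
-/

namespace Multigraph

variable {V : Type u} {E : Type v} {G : Multigraph V E}

section Reachability

variable {S T : Set E} {e : E} {u v : V}

theorem Reach.of_inc (he : e ∈ T) (huv : G.inc e = s(u, v)) : G.Reach T u v :=
  Relation.ReflTransGen.single ⟨e, he, huv⟩

theorem Reach.symm (h : G.Reach T u v) : G.Reach T v u :=
  (G.contractSetoid T).symm h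

theorem Reach.map {V' E' : Type*} {H : Multigraph V' E'} {T' : Set E'} (f : V → V')
    (hf : ∀ e ∈ T, ∀ u v, G.inc e = s(u, v) → H.Reach T' (f u) (f v)) (h : G.Reach T u v) :
    H.Reach T' (f u) (f v) :=
  Relation.ReflTransGen.lift' f (fun u v ⟨e, he, huv⟩ => hf e he u v huv) _ _ h

theorem Reach.mono (hST : S ⊆ T) (h : G.Reach S u v) : G.Reach T u v :=
  h.map id fun _ he _ _ huv => .of_inc (hST he) huv

theorem Reach.apply_eq {α : Type*} (f : V → α)
    (hf : ∀ e ∈ T, ∀ u v, G.inc e = s(u, v) → f u = f v) (h : G.Reach T u v) : f u = f v := by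
  induction h with
  | refl => rfl
  | tail _ hstep ih =>
    obtain ⟨e, he, huv⟩ := hstep
    exact ih.trans (hf e he _ _ huv)

theorem Reach.eq_of_notMem_supp (h : G.Reach T u v) (hv : v ∉ G.supp T) : u = v := by
  obtain rfl | ⟨w, -, e, he, hwv⟩ := Relation.ReflTransGen.cases_tail h
  · rfl
  · exact absurd ⟨e, he, hwv ▸ Sym2.mem_mk_right w v⟩ hv

theorem IsForest.mono (hST : S ⊆ T) (hT : G.IsForest T) : G.IsForest S := fun e he =>
  ⟨(hT e (hST he)).1, fun u v huv h =>
    (hT e (hST he)).2 u v huv (h.mono (Set.sdiff_subset_sdiff_left hST))⟩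

end Reachability

section ComponentCount

/-- The number of components of the spanning subgraph `G⟨T⟩`, isolated vertices included. -/
noncomputable def numComponents (G : Multigraph V E) (T : Set E) : ℕ :=
  Nat.card (Quotient (G.contractSetoid T))

variable {T : Set E} {e : E} {a b : V}

theorem numComponents_eq_ncard_range {α : Type*} (f : V → α)
    (hf : ∀ u v, G.Reach T u v ↔ f u = f v) : G.numComponents T = (Set.range f).ncard := by
  have hker : G.contractSetoid T = Setoid.ker f := Setoid.ext hf
  rw [numComponents, hker]
  exact Nat.card_congr (Setoid.quotientKerEquivRange f)

theorem numComponents_empty (G : Multigraph V E) : G.numComponents ∅ = Nat.card V := by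
  rw [numComponents_eq_ncard_range id fun u v =>
    ⟨fun h => h.apply_eq id (by simp), fun h : u = v => h ▸ Relation.ReflTransGen.refl⟩,
    Set.range_id, Set.ncard_univ]

theorem numComponents_insert_of_reach (he : G.inc e = s(a, b)) (hab : G.Reach T a b) :
    G.numComponents (insert e T) = G.numComponents T := by
  suffices h : G.contractSetoid (insert e T) = G.contractSetoid T by
    rw [numComponents, numComponents, h]
  refine Setoid.ext fun u v => ⟨fun h => h.map id ?_, fun h => h.mono (Set.subset_insert e T)⟩
  rintro f (rfl | hf) x y hxy
  · obtain ⟨rfl, rfl⟩ | ⟨rfl, rfl⟩ := Sym2.eq_iff.1 (he.symm.trans hxy)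
    exacts [hab, hab.symm]
  · exact .of_inc hf hxy

open Classical in
/-- The map sending a vertex to its component in `G⟨T⟩`, except that the component of `b` is
replaced by that of `a`. Its fibres are the components left after adding an edge from `a`
to `b`. -/
noncomputable def mergedComponent (G : Multigraph V E) (T : Set E) (a b : V) (u : V) :
    Quotient (G.contractSetoid T) :=
  if G.Reach T u b then Quotient.mk _ a else Quotient.mk _ u

theorem mergedComponent_of_reach {u : V} (hu : G.Reach T u b) :
    G.mergedComponent T a b u = Quotient.mk _ a :=
  if_pos hu

theorem mergedComponent_of_not_reach {u : V} (hu : ¬ G.Reach T u b) :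
    G.mergedComponent T a b u = Quotient.mk _ u :=
  if_neg hu

theorem mergedComponent_left : G.mergedComponent T a b a = Quotient.mk _ a :=
  ite_self _

theorem mergedComponent_right : G.mergedComponent T a b b = Quotient.mk _ a :=
  mergedComponent_of_reach Relation.ReflTransGen.refl

theorem Reach.mergedComponent_eq {u v : V} (h : G.Reach T u v) :
    G.mergedComponent T a b u = G.mergedComponent T a b v := by
  by_cases hv : G.Reach T v b
  · rw [mergedComponent_of_reach hv, mergedComponent_of_reach (h.trans hv)]
  · have hu : ¬ G.Reach T u b := fun hu => hv (h.symm.trans hu)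
    rw [mergedComponent_of_not_reach hu, mergedComponent_of_not_reach hv]
    exact Quotient.sound h

theorem reach_insert_of_mergedComponent_eq_mk (he : G.inc e = s(a, b)) {u w : V}
    (h : G.mergedComponent T a b u = Quotient.mk _ w) : G.Reach (insert e T) u w := by
  have reach_insert {x y : V} (hxy : G.Reach T x y) : G.Reach (insert e T) x y :=
    hxy.mono (Set.subset_insert e T)
  by_cases hu : G.Reach T u b
  · rw [mergedComponent_of_reach hu] at h
    have hab : G.Reach (insert e T) a b := .of_inc (Set.mem_insert e T) he
    exact (reach_insert hu).trans (hab.symm.trans (reach_insert (Quotient.exact h)))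
  · rw [mergedComponent_of_not_reach hu] at h
    exact reach_insert (Quotient.exact h)

theorem reach_insert_iff_mergedComponent_eq (he : G.inc e = s(a, b)) (u v : V) :
    G.Reach (insert e T) u v ↔ G.mergedComponent T a b u = G.mergedComponent T a b v := by
  constructor
  · refine fun h => h.apply_eq _ ?_
    rintro f (rfl | hf) x y hxy
    · obtain ⟨rfl, rfl⟩ | ⟨rfl, rfl⟩ := Sym2.eq_iff.1 (he.symm.trans hxy) <;>
        rw [mergedComponent_left, mergedComponent_right]
    · exact (Reach.of_inc hf hxy).mergedComponent_eq
  · intro h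
    obtain ⟨w, hw⟩ := Quotient.exists_rep (G.mergedComponent T a b v)
    exact (reach_insert_of_mergedComponent_eq_mk he (h.trans hw.symm)).trans
      (reach_insert_of_mergedComponent_eq_mk he hw.symm).symm

theorem range_mergedComponent (hab : ¬ G.Reach T a b) :
    Set.range (G.mergedComponent T a b) = {Quotient.mk _ b}ᶜ := by
  ext q
  constructor
  · rintro ⟨u, rfl⟩ hub
    by_cases hu : G.Reach T u b
    · exact hab (Quotient.exact ((mergedComponent_of_reach hu).symm.trans hub))
    · exact hu (Quotient.exact ((mergedComponent_of_not_reach hu).symm.trans hub))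
  · induction q using Quotient.ind with
    | _ w => exact fun hw => ⟨w, mergedComponent_of_not_reach fun h => hw (Quotient.sound h)⟩

theorem numComponents_insert_of_not_reach [Finite V] (he : G.inc e = s(a, b))
    (hab : ¬ G.Reach T a b) : G.numComponents (insert e T) + 1 = G.numComponents T := by
  rw [numComponents_eq_ncard_range _ (reach_insert_iff_mergedComponent_eq he),
    range_mergedComponent hab, add_comm, ← Set.ncard_singleton (Quotient.mk _ b),
    Set.ncard_add_ncard_compl, numComponents]

theorem numComponents_le_numComponents_insert_add_one [Finite V] (G : Multigraph V E) (T : Set E)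
    (e : E) : G.numComponents T ≤ G.numComponents (insert e T) + 1 := by
  induction he : G.inc e with
  | _ a b =>
    by_cases hab : G.Reach T a b
    · exact (numComponents_insert_of_reach he hab).ge.trans (Nat.le_succ _)
    · exact (numComponents_insert_of_not_reach he hab).ge

theorem card_le_ncard_add_numComponents [Finite V] (G : Multigraph V E) (hT : T.Finite) :
    Nat.card V ≤ T.ncard + G.numComponents T := by
  induction T, hT using Set.Finite.induction_on with
  | empty => rw [Set.ncard_empty, zero_add, numComponents_empty]
  | @insert e T he hT ih =>
    rw [Set.ncard_insert_of_notMem he hT]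
    linarith [G.numComponents_le_numComponents_insert_add_one T e]

theorem IsForest.ncard_add_numComponents [Finite V] (hT : T.Finite) (hF : G.IsForest T) :
    T.ncard + G.numComponents T = Nat.card V := by
  induction T, hT using Set.Finite.induction_on with
  | empty => rw [Set.ncard_empty, zero_add, numComponents_empty]
  | @insert e T he hT ih =>
    induction hab : G.inc e with
    | _ a b =>
      have hbridge : ¬ G.Reach T a b := by
        simpa only [Set.insert_sdiff_self_of_notMem he]
          using (hF e (Set.mem_insert e T)).2 a b hab
      rw [Set.ncard_insert_of_notMem he hT, ← ih (hF.mono (Set.subset_insert e T)),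
        ← numComponents_insert_of_not_reach hab hbridge]
      ring

theorem ConnectedOn.card_le_ncard_add_one [Finite V] (hT : T.Finite) (hc : G.ConnectedOn T) :
    Nat.card V ≤ T.ncard + 1 := by
  have hle : G.numComponents T ≤ 1 :=
    Finite.card_le_one_iff_subsingleton.2
      ⟨Quotient.ind₂ fun u v => Quotient.sound (hc u v)⟩
  exact (G.card_le_ncard_add_numComponents hT).trans (Nat.add_le_add_left hle _)

end ComponentCount

section ComponentLabelling

variable {ι : Type*} {W : Set E} {comp : V → ι}

/-- `comp` labels the components of `G[W]` bijectively by `ι`. Its values at vertices not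
incident with `W` are irrelevant. -/
structure IsComponentLabelling (G : Multigraph V E) (W : Set E) (comp : V → ι) : Prop where
  eq_iff_reach : ∀ u v, u ∈ G.supp W → v ∈ G.supp W → (comp u = comp v ↔ G.Reach W u v)
  exists_mem_supp : ∀ i, ∃ v ∈ G.supp W, comp v = i

theorem IsComponentLabelling.numComponents_eq [Finite V] (h : G.IsComponentLabelling W comp) :
    G.numComponents W = Nat.card ι + (G.supp W)ᶜ.ncard := by
  classical
  let label : V → ι ⊕ ↥(G.supp W)ᶜ := fun v =>
    if hv : v ∈ G.supp W then Sum.inl (comp v) else Sum.inr ⟨v, hv⟩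
  have label_surjective : Function.Surjective label := by
    rintro (i | ⟨v, hv⟩)
    · obtain ⟨v, hv, rfl⟩ := h.exists_mem_supp i
      exact ⟨v, dif_pos hv⟩
    · exact ⟨v, dif_neg hv⟩
  have reach_iff : ∀ u v, G.Reach W u v ↔ label u = label v := by
    intro u v
    by_cases hu : u ∈ G.supp W <;> by_cases hv : v ∈ G.supp W
    · simp only [label, dif_pos hu, dif_pos hv, Sum.inl.injEq, h.eq_iff_reach u v hu hv]
    · simp only [label, dif_pos hu, dif_neg hv, reduceCtorEq, iff_false]
      exact fun huv => hv (huv.eq_of_notMem_supp hv ▸ hu)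
    · simp only [label, dif_neg hu, dif_pos hv, reduceCtorEq, iff_false]
      exact fun huv => hu (huv.symm.eq_of_notMem_supp hu ▸ hv)
    · simp only [label, dif_neg hu, dif_neg hv, Sum.inr.injEq, Subtype.mk.injEq]
      exact ⟨fun huv => huv.eq_of_notMem_supp hv, fun huv => huv ▸ Relation.ReflTransGen.refl⟩
  have : Finite (ι ⊕ ↥(G.supp W)ᶜ) := .of_surjective label label_surjective
  have : Finite ι := Finite.sum_left ↥(G.supp W)ᶜ
  rw [numComponents_eq_ncard_range label reach_iff, label_surjective.range_eq, Set.ncard_univ,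
    Nat.card_sum, Nat.card_coe_set_eq]

theorem IsComponentLabelling.ncard_supp_eq [Finite V] (h : G.IsComponentLabelling W comp)
    (hW : W.Finite) (hF : G.IsForest W) : (G.supp W).ncard = W.ncard + Nat.card ι := by
  have hcount := hF.ncard_add_numComponents hW
  rw [h.numComponents_eq, ← Set.ncard_add_ncard_compl (G.supp W)] at hcount
  linarith

end ComponentLabelling

section DeleteEdges

variable {D S : Set E} {U : Set V}

theorem reach_deleteEdges_iff {T : Set {e // e ∉ D}} {u v : V} :
    (G.deleteEdges D).Reach T u v ↔ G.Reach (Subtype.val '' T) u v := by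
  constructor
  · exact fun h => h.map id fun e he _ _ huv => .of_inc ⟨e, he, rfl⟩ huv
  · refine fun h => h.map id ?_
    rintro _ ⟨e, he, rfl⟩ u v huv
    exact .of_inc he huv

theorem isSpanningTree_deleteEdges_iff {T : Set {e // e ∉ D}} :
    (G.deleteEdges D).IsSpanningTree T ↔ G.IsSpanningTree (Subtype.val '' T) := by
  simp only [IsSpanningTree, ConnectedOn, reach_deleteEdges_iff,
    Set.ncard_image_of_injective _ Subtype.val_injective]

theorem tau_deleteEdges (hSD : Disjoint S D) (hD : ∀ T ∈ G.ST S, Disjoint T D) :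
    (G.deleteEdges D).tau (Subtype.val ⁻¹' S) = G.tau S := by
  have range_val : Set.range (Subtype.val : {e // e ∉ D} → E) = Dᶜ := Subtype.range_coe
  have image_ST : Set.image Subtype.val '' (G.deleteEdges D).ST (Subtype.val ⁻¹' S) = G.ST S := by
    ext T
    constructor
    · rintro ⟨T, ⟨hT, hST⟩, rfl⟩
      refine ⟨isSpanningTree_deleteEdges_iff.1 hT, ?_⟩
      rw [← Set.image_preimage_eq_of_subset (s := S) (range_val ▸ hSD.subset_compl_right)]
      exact Set.image_mono hST
    · intro hT
      have hval : Subtype.val '' (Subtype.val ⁻¹' T : Set {e // e ∉ D}) = T :=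
        Set.image_preimage_eq_of_subset (range_val ▸ (hD T hT).subset_compl_right)
      exact ⟨_, ⟨isSpanningTree_deleteEdges_iff.2 (hval.symm ▸ hT.1), Set.preimage_mono hT.2⟩, hval⟩
  rw [tau, tau, ← image_ST, Set.ncard_image_of_injective _ Subtype.val_injective.image_injective]

theorem IsClique.deleteEdges (hU : G.IsClique U) (hD : Disjoint (G.edgesWithin U) D) :
    (G.deleteEdges D).IsClique U := by
  refine ⟨fun u hu v hv huv => ?_, fun e he => hU.2 e he⟩
  obtain ⟨e, he, heq⟩ := hU.1 u hu v hv huv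
  have heU : e ∈ G.edgesWithin U := by
    intro w hw
    obtain rfl | rfl := Sym2.mem_iff.1 (he ▸ hw)
    exacts [hu, hv]
  exact ⟨⟨e, hD.notMem_of_mem_left heU⟩, he, fun f hf => Subtype.ext (heq f hf)⟩

theorem edgesBetween_deleteEdges_eq_empty {U₁ U₂ : Set V} (h : G.edgesBetween U₁ U₂ ⊆ D) :
    (G.deleteEdges D).edgesBetween U₁ U₂ = ∅ :=
  Set.eq_empty_of_forall_notMem fun e he => e.2 (h he)

theorem StarComponents.deleteEdges {C : Set V} (h : G.StarComponents S C) (D : Set E) :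
    (G.deleteEdges D).StarComponents (Subtype.val ⁻¹' S) C := by
  have edgeConn_val : ∀ {e f}, (G.deleteEdges D).EdgeConn (Subtype.val ⁻¹' S) e f →
      G.EdgeConn S e f := fun ⟨u, v, hu, hv, huv⟩ =>
    ⟨u, v, hu, hv, (reach_deleteEdges_iff.1 huv).mono (Set.image_preimage_subset _ _)⟩
  intro e he
  obtain ⟨w, hw, hstar⟩ := h e he
  refine ⟨w, hw, fun f hf hef => ?_⟩
  obtain ⟨hwf, hloop, hpar⟩ := hstar f hf (edgeConn_val hef)
  exact ⟨hwf, hloop, fun g hg heg hgf => Subtype.ext (hpar g hg (edgeConn_val heg) hgf)⟩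

end DeleteEdges

section CrossEdges

variable {ι : Type*} {part : V → ι}

/-- The edges joining different classes of the partition of `V` into the fibres of `part`: the
set `M` of the paper. -/
def crossEdges (G : Multigraph V E) (part : V → ι) : Set E :=
  ⋃ (i : ι), ⋃ (j : ι), ⋃ (_ : i ≠ j), G.edgesBetween (part ⁻¹' {i}) (part ⁻¹' {j})

theorem edgesBetween_subset_crossEdges {i j : ι} (hij : i ≠ j) :
    G.edgesBetween (part ⁻¹' {i}) (part ⁻¹' {j}) ⊆ G.crossEdges part := fun _ he =>
  Set.mem_iUnion.2 ⟨i, Set.mem_iUnion.2 ⟨j, Set.mem_iUnion.2 ⟨hij, he⟩⟩⟩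

theorem disjoint_edgesWithin_crossEdges (i : ι) :
    Disjoint (G.edgesWithin (part ⁻¹' {i})) (G.crossEdges part) := by
  simp only [crossEdges, Set.disjoint_iUnion_right]
  refine fun j l hjl => Set.disjoint_left.2 ?_
  rintro e he ⟨u, v, huv, rfl, rfl⟩
  have hu : part u = i := he u (huv ▸ Sym2.mem_mk_left u v)
  have hv : part v = i := he v (huv ▸ Sym2.mem_mk_right u v)
  exact hjl (hu.trans hv.symm)

end CrossEdges

section StarGraph

variable {W : Set E} {r : ℕ} {comp : V → Fin r}

/-- The edges of `G⋆W` not in `G`: the pair `(i, v)` is the edge from the new vertex `wᵢ` to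
the vertex `v` of the `i`-th component of `G[W]`. -/
abbrev StarEdge (G : Multigraph V E) (W : Set E) (comp : V → Fin r) : Type u :=
  {p : Fin r × V // p.2 ∈ G.supp W ∧ comp p.2 = p.1}

theorem ncard_range_inr_starEdge :
    (Set.range (Sum.inr : G.StarEdge W comp → E ⊕ G.StarEdge W comp)).ncard =
      (G.supp W).ncard := by
  rw [Set.ncard_range_of_injective Sum.inr_injective]
  exact Nat.card_congr
    { toFun p := ⟨p.1.2, p.2.1⟩
      invFun v := ⟨(comp v, v), v.2, rfl⟩
      left_inv := fun ⟨⟨_, _⟩, _, hi⟩ => Subtype.ext (Prod.ext hi rfl)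
      right_inv _ := rfl }

theorem starGraph_inc_eq_inl_iff {x : E ⊕ G.StarEdge W comp} {u v : V} :
    (G.starGraph W comp).inc x = s(Sum.inl u, Sum.inl v) ↔
      ∃ e, G.inc e = s(u, v) ∧ Sum.inl e = x := by
  rcases x with e | p
  · have hmap : (G.starGraph W comp).inc (Sum.inl e) = s(Sum.inl u, Sum.inl v) ↔
        G.inc e = s(u, v) := (Sym2.map.injective Sum.inl_injective).eq_iff (b := s(u, v))
    simp [hmap]
  · simp [starGraph]

theorem edgesBetween_starGraph_image_inl (U₁ U₂ : Set V) :
    (G.starGraph W comp).edgesBetween (Sum.inl '' U₁) (Sum.inl '' U₂) =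
      Sum.inl '' G.edgesBetween U₁ U₂ := by
  ext x
  constructor
  · rintro ⟨_, _, hx, ⟨u, hu, rfl⟩, v, hv, rfl⟩
    obtain ⟨e, he, rfl⟩ := starGraph_inc_eq_inl_iff.1 hx
    exact ⟨e, ⟨u, v, he, hu, hv⟩, rfl⟩
  · rintro ⟨e, ⟨u, v, he, hu, hv⟩, rfl⟩
    exact ⟨_, _, starGraph_inc_eq_inl_iff.2 ⟨e, he, rfl⟩, ⟨u, hu, rfl⟩, v, hv, rfl⟩

theorem edgesWithin_starGraph_image_inl (U : Set V) :
    (G.starGraph W comp).edgesWithin (Sum.inl '' U) = Sum.inl '' G.edgesWithin U := by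
  ext (e | p)
  · simp [edgesWithin, starGraph]
  · simp [edgesWithin, starGraph]

theorem IsClique.starGraph {U : Set V} (hU : G.IsClique U) (W : Set E) (comp : V → Fin r) :
    (G.starGraph W comp).IsClique (Sum.inl '' U) := by
  constructor
  · rintro _ ⟨u, hu, rfl⟩ _ ⟨v, hv, rfl⟩ huv
    obtain ⟨e, he, heq⟩ := hU.1 u hu v hv (huv <| congrArg Sum.inl ·)
    refine ⟨Sum.inl e, starGraph_inc_eq_inl_iff.2 ⟨e, he, rfl⟩, fun x hx => ?_⟩
    obtain ⟨f, hf, rfl⟩ := starGraph_inc_eq_inl_iff.1 hx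
    exact congrArg Sum.inl (heq f hf)
  · rw [edgesWithin_starGraph_image_inl]
    rintro _ ⟨e, he, rfl⟩ hloop
    exact hU.2 e he ((Sym2.isDiag_map Sum.inl_injective).1 hloop)

theorem starGraph_edgeConn_range_inr {p q : G.StarEdge W comp}
    (h : (G.starGraph W comp).EdgeConn (Set.range Sum.inr) (Sum.inr p) (Sum.inr q)) :
    p.1.1 = q.1.1 := by
  have label_of_mem : ∀ (p : G.StarEdge W comp) (x : V ⊕ Fin r),
      x ∈ (G.starGraph W comp).inc (Sum.inr p) → Sum.elim comp id x = p.1.1 := by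
    intro p x hx
    obtain rfl | rfl := Sym2.mem_iff.1 hx
    exacts [rfl, p.2.2]
  obtain ⟨x, y, hx, hy, hxy⟩ := h
  rw [← label_of_mem p x hx, ← label_of_mem q y hy]
  refine hxy.apply_eq (Sum.elim comp id) ?_
  rintro _ ⟨p, rfl⟩ x y hxy
  rw [label_of_mem p x (hxy ▸ Sym2.mem_mk_left x y), label_of_mem p y (hxy ▸ Sym2.mem_mk_right x y)]

theorem starComponents_starGraph (G : Multigraph V E) (W : Set E) (comp : V → Fin r) :
    (G.starGraph W comp).StarComponents (Set.range Sum.inr) (Set.range Sum.inr) := by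
  rintro _ ⟨p, rfl⟩
  refine ⟨Sum.inr p.1.1, ⟨_, rfl⟩, ?_⟩
  rintro _ ⟨q, rfl⟩ hpq
  refine ⟨?_, by simp [Multigraph.starGraph], ?_⟩
  · rw [starGraph_edgeConn_range_inr hpq]
    exact Sym2.mem_mk_left _ _
  · rintro _ ⟨q', rfl⟩ - hinc
    congr
    simpa [Multigraph.starGraph, Subtype.ext_iff, Prod.ext_iff] using hinc

/-- The edge set of `G⋆W` consisting of `X ⊆ E(G)` and all the new edges. -/
def withStarEdges (G : Multigraph V E) (W : Set E) (comp : V → Fin r) (X : Set E) :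
    Set (E ⊕ G.StarEdge W comp) :=
  Sum.inl '' X ∪ Set.range Sum.inr

theorem preimage_inl_withStarEdges (X : Set E) :
    Sum.inl ⁻¹' G.withStarEdges W comp X = X := by
  simp [withStarEdges, Set.preimage_image_eq _ Sum.inl_injective]

theorem withStarEdges_preimage_inl {Y : Set (E ⊕ G.StarEdge W comp)}
    (hY : Set.range Sum.inr ⊆ Y) : G.withStarEdges W comp (Sum.inl ⁻¹' Y) = Y := by
  ext (e | p)
  · simp [withStarEdges]
  · exact iff_of_true (Or.inr ⟨p, rfl⟩) (hY ⟨p, rfl⟩)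

theorem Reach.starGraph_inl (hcomp : G.IsComponentLabelling W comp) {X : Set E} {u v : V}
    (h : G.Reach (X ∪ W) u v) :
    (G.starGraph W comp).Reach (G.withStarEdges W comp X) (Sum.inl u) (Sum.inl v) := by
  refine h.map Sum.inl ?_
  rintro e (heX | heW) u v huv
  · exact .of_inc (Or.inl ⟨e, heX, rfl⟩) (starGraph_inc_eq_inl_iff.2 ⟨e, huv, rfl⟩)
  · have hu : u ∈ G.supp W := ⟨e, heW, huv ▸ Sym2.mem_mk_left u v⟩
    have hv : v ∈ G.supp W := ⟨e, heW, huv ▸ Sym2.mem_mk_right u v⟩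
    have huv_comp : comp u = comp v := (hcomp.eq_iff_reach u v hu hv).2 (.of_inc heW huv)
    have reach_center : ∀ w ∈ G.supp W, (G.starGraph W comp).Reach
        (G.withStarEdges W comp X) (Sum.inr (comp w)) (Sum.inl w) := fun w hw =>
      .of_inc (Or.inr ⟨⟨(comp w, w), hw, rfl⟩, rfl⟩) rfl
    exact (reach_center u hu).symm.trans (huv_comp ▸ reach_center v hv)

theorem Reach.of_starGraph_inl (hcomp : G.IsComponentLabelling W comp) {X : Set E} {u v : V}
    (h : (G.starGraph W comp).Reach (G.withStarEdges W comp X) (Sum.inl u) (Sum.inl v)) :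
    G.Reach (X ∪ W) u v := by
  choose rep hrep comp_rep using hcomp.exists_mem_supp
  refine h.map (Sum.elim id rep) ?_
  rintro _ (⟨e, he, rfl⟩ | ⟨⟨⟨i, w⟩, hw, hi⟩, rfl⟩) x y hxy
  · refine .of_inc (Or.inl he) ?_
    simpa [starGraph, Sym2.map_map, Sym2.map_id] using congrArg (Sym2.map (Sum.elim id rep)) hxy
  · have hreach : G.Reach (X ∪ W) (rep i) w :=
      ((hcomp.eq_iff_reach _ _ (hrep i) hw).1 ((comp_rep i).trans hi.symm)).mono
        Set.subset_union_right
    obtain ⟨rfl, rfl⟩ | ⟨rfl, rfl⟩ := Sym2.eq_iff.1 hxy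
    exacts [hreach, hreach.symm]

theorem exists_starGraph_reach_inl (hcomp : G.IsComponentLabelling W comp) (X : Set E)
    (x : V ⊕ Fin r) :
    ∃ v, (G.starGraph W comp).Reach (G.withStarEdges W comp X) x (Sum.inl v) := by
  rcases x with v | i
  · exact ⟨v, Relation.ReflTransGen.refl⟩
  · obtain ⟨v, hv, hi⟩ := hcomp.exists_mem_supp i
    exact ⟨v, .of_inc (Or.inr ⟨⟨(i, v), hv, hi⟩, rfl⟩) rfl⟩

theorem connectedOn_withStarEdges_iff (hcomp : G.IsComponentLabelling W comp) {X : Set E} :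
    (G.starGraph W comp).ConnectedOn (G.withStarEdges W comp X) ↔ G.ConnectedOn (X ∪ W) := by
  refine ⟨fun h u v => .of_starGraph_inl hcomp (h _ _), fun h x y => ?_⟩
  obtain ⟨u, hu⟩ := exists_starGraph_reach_inl hcomp X x
  obtain ⟨v, hv⟩ := exists_starGraph_reach_inl hcomp X y
  exact hu.trans (((h u v).starGraph_inl hcomp).trans hv.symm)

variable [Finite V] [Finite E]

theorem ncard_withStarEdges (hcomp : G.IsComponentLabelling W comp) (hF : G.IsForest W)
    (X : Set E) : (G.withStarEdges W comp X).ncard = X.ncard + W.ncard + r := by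
  have hdisj : Disjoint (Sum.inl '' X) (Set.range (Sum.inr : G.StarEdge W comp → _)) :=
    Set.isCompl_range_inl_range_inr.disjoint.mono_left (Set.image_subset_range _ _)
  rw [withStarEdges, Set.ncard_union_eq hdisj, Set.ncard_image_of_injective _ Sum.inl_injective,
    ncard_range_inr_starEdge, hcomp.ncard_supp_eq W.toFinite hF, Nat.card_fin, add_assoc]

theorem isSpanningTree_withStarEdges_iff (hcomp : G.IsComponentLabelling W comp)
    (hF : G.IsForest W) {X : Set E} :
    (G.starGraph W comp).IsSpanningTree (G.withStarEdges W comp X) ↔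
      G.IsSpanningTree (X ∪ W) ∧ Disjoint X W := by
  rw [IsSpanningTree, IsSpanningTree, connectedOn_withStarEdges_iff hcomp,
    ncard_withStarEdges hcomp hF, Nat.card_sum, Nat.card_fin, and_assoc, and_congr_right_iff]
  intro hconn
  have hcard := hconn.card_le_ncard_add_one (Set.toFinite _)
  have hunion := Set.ncard_union_add_ncard_inter X W
  rw [Set.disjoint_iff_inter_eq_empty, ← Set.ncard_eq_zero]
  lia

theorem ST_starGraph (hcomp : G.IsComponentLabelling W comp) (hF : G.IsForest W) :
    (G.starGraph W comp).ST (Set.range Sum.inr) =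
      (fun T => G.withStarEdges W comp (T \ W)) '' G.ST W := by
  ext Y
  constructor
  · rintro ⟨hY, hsub⟩
    rw [← withStarEdges_preimage_inl hsub, isSpanningTree_withStarEdges_iff hcomp hF] at hY
    refine ⟨Sum.inl ⁻¹' Y ∪ W, ⟨hY.1, Set.subset_union_right⟩, ?_⟩
    simp only [Set.union_sdiff_right, hY.2.sdiff_eq_left, withStarEdges_preimage_inl hsub]
  · rintro ⟨T, ⟨hT, hWT⟩, rfl⟩
    refine ⟨(isSpanningTree_withStarEdges_iff hcomp hF).2 ?_, Set.subset_union_right⟩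
    rw [Set.sdiff_union_of_subset hWT]
    exact ⟨hT, Set.disjoint_sdiff_left⟩

theorem tau_starGraph (hcomp : G.IsComponentLabelling W comp) (hF : G.IsForest W) :
    (G.starGraph W comp).tau (Set.range Sum.inr) = G.tau W := by
  rw [tau, tau, ST_starGraph hcomp hF]
  refine Set.InjOn.ncard_image fun S hS T hT hST => ?_
  have hdiff : S \ W = T \ W := by
    simpa only [preimage_inl_withStarEdges] using congrArg (Sum.inl ⁻¹' ·) hST
  rw [← Set.sdiff_union_of_subset hS.2, hdiff, Set.sdiff_union_of_subset hT.2]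

theorem disjoint_image_inl_of_mem_ST_starGraph (hcomp : G.IsComponentLabelling W comp)
    (hF : G.IsForest W) {Y : Set (E ⊕ G.StarEdge W comp)}
    (hY : Y ∈ (G.starGraph W comp).ST (Set.range Sum.inr)) : Disjoint Y (Sum.inl '' W) := by
  rw [ST_starGraph hcomp hF] at hY
  obtain ⟨T, -, rfl⟩ := hY
  refine Set.disjoint_left.2 ?_
  rintro _ heY ⟨e, heW, rfl⟩
  rw [← Set.mem_preimage, preimage_inl_withStarEdges] at heY
  exact heY.2 heW

theorem tau_starGraph_deleteEdges (hcomp : G.IsComponentLabelling W comp) (hF : G.IsForest W)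
    {M : Set E} (hMW : M ⊆ W) :
    ((G.starGraph W comp).deleteEdges (Sum.inl '' M)).tau (Subtype.val ⁻¹' Set.range Sum.inr) =
      G.tau W := by
  rw [tau_deleteEdges, tau_starGraph hcomp hF]
  · exact Set.isCompl_range_inl_range_inr.symm.disjoint.mono_right (Set.image_subset_range _ _)
  · exact fun Y hY => (disjoint_image_inl_of_mem_ST_starGraph hcomp hF hY).mono_right
      (Set.image_mono hMW)

end StarGraph

end Multigraph

theorem mem_liftedClass_iff {V : Type u} {k r : ℕ} {part : V → Option (Fin k)} {x : V ⊕ Fin r}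
    {i : Option (Fin k)} :
    x ∈ liftedClass k r part i ↔ Sum.elim part (fun _ => none) x = i := by
  rcases x with v | j <;> rcases i with _ | i <;> simp [liftedClass]

theorem existsUnique_mem_liftedClass {V : Type u} {k r : ℕ} (part : V → Option (Fin k))
    (x : V ⊕ Fin r) : ∃! i, x ∈ liftedClass k r part i := by
  simp only [mem_liftedClass_iff, existsUnique_eq']

/-- the reduction of `τ_G(W)` to a special case, via the graph
`G' = (G⋆W) − M`. The partition `V₀, V₁, …, V_k` is encoded by
`part : V → Option (Fin k)`, with `V₀ = part ⁻¹' {none}` and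
`Vᵢ = part ⁻¹' {some i}` a clique for each `i`. -/
theorem tau_starGraph_reduction {V : Type u} {E : Type v} [Fintype V] [Fintype E]
    (G : Multigraph V E) (hconn : G.Connected)
    (k : ℕ) (part : V → Option (Fin k))
    (hne : ∀ i : Fin k, (part ⁻¹' {some i}).Nonempty)
    (hclique : ∀ i : Fin k, G.IsClique (part ⁻¹' {some i}))
    (M : Set E)
    (hM : M = ⋃ (i : Option (Fin k)), ⋃ (j : Option (Fin k)), ⋃ (_ : i ≠ j),
      G.edgesBetween (part ⁻¹' {i}) (part ⁻¹' {j}))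
    (W : Set E) (hMW : M ⊆ W) (hforest : G.IsForest W)
    (r : ℕ) (comp : V → Fin r)
    (hcomp : ∀ u v : V, u ∈ G.supp W → v ∈ G.supp W →
      (comp u = comp v ↔ G.Reach W u v))
    (hsurj : ∀ i : Fin r, ∃ v ∈ G.supp W, comp v = i) :
    -- (i) `τ_G(W) = τ_{G'}(W')`
    (G.tau W = ((G.starGraph W comp).deleteEdges (Sum.inl '' M)).tau
      (Subtype.val ⁻¹' (Set.range Sum.inr))) ∧
    -- (ii) `V'₀, V₁, …, V_k` is a partition of `V(G')`, each `Vᵢ` a clique of `G'`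
    ((∀ x : V ⊕ Fin r, ∃! i : Option (Fin k), x ∈ liftedClass k r part i) ∧
      ∀ i : Fin k, ((G.starGraph W comp).deleteEdges (Sum.inl '' M)).IsClique
        (liftedClass k r part (some i))) ∧
    -- (iii) `E_{G'}(Vᵢ, Vⱼ) = ∅` for distinct `i, j ∈ {1, …, k}`
    (∀ i j : Fin k, i ≠ j →
      ((G.starGraph W comp).deleteEdges (Sum.inl '' M)).edgesBetween
        (liftedClass k r part (some i)) (liftedClass k r part (some j)) = ∅) ∧
    -- (iv) every component of `G'[W']` is a star with center among the new vertices
    ((G.starGraph W comp).deleteEdges (Sum.inl '' M)).StarComponents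
      (Subtype.val ⁻¹' (Set.range Sum.inr))
      (Set.range (Sum.inr : Fin r → V ⊕ Fin r)) := by
  have hlabel : G.IsComponentLabelling W comp := ⟨hcomp, hsurj⟩
  change M = G.crossEdges part at hM
  refine ⟨(tau_starGraph_deleteEdges hlabel hforest hMW).symm,
    ⟨existsUnique_mem_liftedClass part, fun i => ?_⟩, fun i j hij => ?_,
    (starComponents_starGraph G W comp).deleteEdges _⟩
  · refine ((hclique i).starGraph W comp).deleteEdges ?_
    rw [edgesWithin_starGraph_image_inl, Set.disjoint_image_iff Sum.inl_injective, hM]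
    exact disjoint_edgesWithin_crossEdges (some i)
  · refine edgesBetween_deleteEdges_eq_empty ?_
    change edgesBetween _ (Sum.inl '' _) (Sum.inl '' _) ⊆ _
    rw [edgesBetween_starGraph_image_inl, hM]
    exact Set.image_mono (edgesBetween_subset_crossEdges (Option.some_injective _ |>.ne hij))

end PaperST
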